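/- arXiv:2310.09227 — 2 statements merged into one kernel-verified Lean document; each statement's English description precedes it below -/
import Mathlib

section
/- Let n, k be natural numbers with n ≥ 2k − 1. The ℤ-linear map from the free abelian group of integer-valued functions on the k-element subsets of {1,…,n} to the free abelian group of integer-valued functions on the standard subsets of size at most k, sending v to the function β ↦ Σ_{A a k-subset with β ⊆ A} v(A), is bijective. (Equivalently, the Bier matrix P_k is square and unimodular.) -/
open scoped Classical

/-- A finset `β = {b₁ < b₂ < … < b_m}` of naturals is *standard* if `bᵢ ≥ 2i` for all `i`. -/
def IsStandard (β : Finset ℕ) : Prop :=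
  ∀ i < β.card, 2 * (i + 1) ≤ (β.sort (· ≤ ·)).getD i 0

/-- The `k`-element subsets of `{1,…,n}`. -/
def ksubsets (n k : ℕ) : Finset (Finset ℕ) :=
  (Finset.Icc 1 n).powerset.filter fun A => A.card = k

/-- The standard subsets of `{1,…,n}` of size at most `k`. -/
noncomputable def stdLe (n k : ℕ) : Finset (Finset ℕ) :=
  (Finset.Icc 1 n).powerset.filter fun β => IsStandard β ∧ β.card ≤ k


lemma isStandard_iff (β : Finset ℕ) :
    IsStandard β ↔ ∀ x ∈ β, 2 * (β.filter (· ≤ x)).card ≤ x := by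
  have key : ∀ i : Fin β.card,
      (β.filter (· ≤ β.orderEmbOfFin rfl i)).card = i.val + 1 := by
    intro i
    have : β.filter (· ≤ β.orderEmbOfFin rfl i) =
        (Finset.Iic i).map (β.orderEmbOfFin rfl).toEmbedding := by
      ext y
      simp only [Finset.mem_filter, Finset.mem_map, Finset.mem_Iic]
      constructor
      · rintro ⟨hy, hle⟩
        have : y ∈ Set.range (β.orderEmbOfFin rfl) := by
          rw [Finset.range_orderEmbOfFin]; exact hy
        obtain ⟨j, rfl⟩ := this
        exact ⟨j, by simpa using hle, rfl⟩
      · rintro ⟨j, hj, rfl⟩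
        exact ⟨Finset.orderEmbOfFin_mem _ _ _, by simpa using hj⟩
    rw [this, Finset.card_map, Fin.card_Iic]
  have hget : ∀ i : Fin β.card, (β.sort (· ≤ ·)).getD i.val 0 = β.orderEmbOfFin rfl i := by
    intro i
    rw [Finset.orderEmbOfFin_apply, List.getD_eq_getElem _ _ (by simp)]
    rfl
  constructor
  · intro h x hx
    have : x ∈ Set.range (β.orderEmbOfFin rfl) := by
      rw [Finset.range_orderEmbOfFin]; exact hx
    obtain ⟨j, rfl⟩ := this
    rw [key, ← hget]
    exact h j j.2
  · intro h i hi
    have := h _ (Finset.orderEmbOfFin_mem β rfl ⟨i, hi⟩)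
    rw [key, ← hget] at this
    exact this

lemma IsStandard.mono {β γ : Finset ℕ} (h : IsStandard β) (hs : γ ⊆ β) : IsStandard γ := by
  rw [isStandard_iff] at *
  intro x hx
  have h1 := h x (hs hx)
  have h2 := Finset.card_le_card (Finset.filter_subset_filter (· ≤ x) hs)
  omega

lemma IsStandard.two_card_le {β : Finset ℕ} {n : ℕ} (h : IsStandard β)
    (hs : β ⊆ Finset.Icc 1 n) : 2 * β.card ≤ n := by
  rw [isStandard_iff] at h
  rcases β.eq_empty_or_nonempty with rfl | hne
  · simp
  · have h1 := h _ (β.max'_mem hne)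
    have h2 := Finset.mem_Icc.1 (hs (β.max'_mem hne))
    rw [Finset.filter_true_of_mem (fun x hx => β.le_max' x hx)] at h1
    omega

lemma isStandard_insert {β : Finset ℕ} {n : ℕ} (h : IsStandard β)
    (hs : β ⊆ Finset.Icc 1 n) (hc : 2 * (β.card + 1) ≤ n + 1) :
    IsStandard (insert (n + 1) β) := by
  rw [isStandard_iff] at *
  intro x hx
  rcases Finset.mem_insert.1 hx with rfl | hx
  · have h1 := Finset.card_filter_le (insert (n+1) β) (· ≤ n + 1)
    have h2 := Finset.card_insert_le (n+1) β
    omega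
  · have := Finset.mem_Icc.1 (hs hx)
    rw [Finset.filter_insert, if_neg (by omega)]
    exact h x hx

lemma mem_stdLe {n k : ℕ} {β : Finset ℕ} :
    β ∈ stdLe n k ↔ β ⊆ Finset.Icc 1 n ∧ IsStandard β ∧ β.card ≤ k := by
  simp [stdLe]

lemma mem_ksubsets {n k : ℕ} {β : Finset ℕ} :
    β ∈ ksubsets n k ↔ β ⊆ Finset.Icc 1 n ∧ β.card = k := by
  simp [ksubsets]

lemma notMem_of_subset_Icc {n : ℕ} {β : Finset ℕ} (h : β ⊆ Finset.Icc 1 n) : n + 1 ∉ β := by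
  intro hx
  have := Finset.mem_Icc.1 (h hx)
  omega

lemma Icc_succ_insert (n : ℕ) : Finset.Icc 1 (n + 1) = insert (n + 1) (Finset.Icc 1 n) := by
  ext x; simp only [Finset.mem_Icc, Finset.mem_insert]; omega

lemma sum_ksubsets_succ (n k : ℕ) (g : Finset ℕ → ℤ) :
    ∑ A ∈ ksubsets (n + 1) (k + 1), g A =
      ∑ A ∈ ksubsets n (k + 1), g A + ∑ A ∈ ksubsets n k, g (insert (n + 1) A) := by
  have e : ∀ n k, ksubsets n k = (Finset.Icc 1 n).powersetCard k := by
    intro n k; ext A; rw [mem_ksubsets, Finset.mem_powersetCard]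
  have hn := notMem_of_subset_Icc (Finset.Subset.refl (Finset.Icc 1 n))
  rw [e, e, e, Icc_succ_insert, Finset.powersetCard_succ_insert hn, Finset.sum_union,
    Finset.sum_image]
  · intro A hA B hB hAB
    have hA' := notMem_of_subset_Icc (Finset.mem_powersetCard.1 hA).1
    have hB' := notMem_of_subset_Icc (Finset.mem_powersetCard.1 hB).1
    rw [← Finset.erase_insert hA', ← Finset.erase_insert hB', hAB]
  · rw [Finset.disjoint_left]
    intro A hA hA2
    obtain ⟨B, _, rfl⟩ := Finset.mem_image.1 hA2
    exact notMem_of_subset_Icc (Finset.mem_powersetCard.1 hA).1 (Finset.mem_insert_self _ _)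

/-- the inclusion transform -/
noncomputable def bier (n k : ℕ) (v : Finset ℕ → ℤ) (β : Finset ℕ) : ℤ :=
  ∑ A ∈ ksubsets n k, if β ⊆ A then v A else 0

def GoodPair (n k : ℕ) : Prop :=
  (∀ v : Finset ℕ → ℤ, (∀ β ∈ stdLe n k, bier n k v β = 0) → ∀ A ∈ ksubsets n k, v A = 0) ∧
  (∀ f : Finset ℕ → ℤ, ∃ v : Finset ℕ → ℤ, ∀ β ∈ stdLe n k, bier n k v β = f β)

lemma bier_succ_of_notMem {n k : ℕ} (v : Finset ℕ → ℤ) {β : Finset ℕ} (hβ : n + 1 ∉ β) :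
    bier (n + 1) (k + 1) v β =
      bier n (k + 1) v β + bier n k (fun A => v (insert (n + 1) A)) β := by
  unfold bier
  rw [sum_ksubsets_succ]
  simp only [Finset.subset_insert_iff_of_notMem hβ]

lemma bier_succ_insert {n k : ℕ} (v : Finset ℕ → ℤ) {β : Finset ℕ} (hβ : n + 1 ∉ β) :
    bier (n + 1) (k + 1) v (insert (n + 1) β) = bier n k (fun A => v (insert (n + 1) A)) β := by
  unfold bier
  rw [sum_ksubsets_succ, Finset.sum_eq_zero, zero_add]
  · simp only [Finset.insert_subset_insert_iff hβ]
  · intro A hA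
    rw [if_neg]
    intro hs
    exact notMem_of_subset_Icc (mem_ksubsets.1 hA).1 (hs (Finset.mem_insert_self _ _))

lemma ksubsets_zero (n : ℕ) : ksubsets n 0 = {∅} := by
  ext A; rw [mem_ksubsets]; simp only [Finset.card_eq_zero, Finset.mem_singleton]
  constructor
  · exact fun h => h.2
  · rintro rfl; simp

lemma good_zero (n : ℕ) : GoodPair n 0 := by
  have hs : ∀ β, β ∈ stdLe n 0 ↔ β = ∅ := by
    intro β; rw [mem_stdLe]
    constructor
    · intro h; exact Finset.card_eq_zero.1 (Nat.le_zero.1 h.2.2)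
    · rintro rfl; simp [IsStandard]
  refine ⟨fun v h => ?_, fun f => ⟨f, ?_⟩⟩
  · have := h ∅ ((hs _).2 rfl)
    simpa [bier, ksubsets_zero] using this
  · intro β hβ
    rw [(hs _).1 hβ]
    simp [bier, ksubsets_zero]

lemma good_step {n k : ℕ} (hnk : 2 * (k + 1) ≤ n + 1) (h1 : GoodPair n (k + 1))
    (h0 : GoodPair n k) : GoodPair (n + 1) (k + 1) := by
  have hlift : ∀ β ∈ stdLe n (k + 1), β ∈ stdLe (n + 1) (k + 1) := by
    intro β hβ
    rw [mem_stdLe] at *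
    exact ⟨hβ.1.trans (Finset.Icc_subset_Icc le_rfl (by omega)), hβ.2⟩
  have hins : ∀ β ∈ stdLe n k, insert (n + 1) β ∈ stdLe (n + 1) (k + 1) := by
    intro β hβ
    rw [mem_stdLe] at *
    refine ⟨?_, isStandard_insert hβ.2.1 hβ.1 (by omega), ?_⟩
    · rw [Icc_succ_insert]; exact Finset.insert_subset_insert _ hβ.1
    · have := Finset.card_insert_le (n + 1) β
      omega
  have hsplit : ∀ A : Finset ℕ, A ⊆ Finset.Icc 1 (n + 1) → n + 1 ∈ A →
      A.erase (n + 1) ⊆ Finset.Icc 1 n := by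
    intro A hA hm
    rw [Icc_succ_insert] at hA
    exact Finset.subset_insert_iff.1 hA
  have hnosplit : ∀ A : Finset ℕ, A ⊆ Finset.Icc 1 (n + 1) → n + 1 ∉ A →
      A ⊆ Finset.Icc 1 n := by
    intro A hA hm
    rw [Icc_succ_insert] at hA
    exact (Finset.subset_insert_iff_of_notMem hm).1 hA
  constructor
  · intro v hv
    have hv1 : ∀ A ∈ ksubsets n k, v (insert (n + 1) A) = 0 := by
      apply h0.1 (fun A => v (insert (n + 1) A))
      intro β hβ
      rw [← bier_succ_insert v (notMem_of_subset_Icc (mem_stdLe.1 hβ).1)]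
      exact hv _ (hins β hβ)
    have hv0 : ∀ A ∈ ksubsets n (k + 1), v A = 0 := by
      apply h1.1
      intro β hβ
      have := hv _ (hlift β hβ)
      rw [bier_succ_of_notMem v (notMem_of_subset_Icc (mem_stdLe.1 hβ).1)] at this
      have hz : bier n k (fun A => v (insert (n + 1) A)) β = 0 := by
        apply Finset.sum_eq_zero
        intro A hA
        simp [hv1 A hA]
      rw [hz, add_zero] at this
      exact this
    intro A hA
    rw [mem_ksubsets] at hA
    by_cases hm : n + 1 ∈ A
    · rw [← Finset.insert_erase hm]
      apply hv1
      rw [mem_ksubsets]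
      refine ⟨hsplit A hA.1 hm, ?_⟩
      rw [Finset.card_erase_of_mem hm]; omega
    · exact hv0 A (mem_ksubsets.2 ⟨hnosplit A hA.1 hm, hA.2⟩)
  · intro f
    obtain ⟨v1, hv1⟩ := h0.2 (fun β => f (insert (n + 1) β))
    obtain ⟨v0, hv0⟩ := h1.2 (fun β => f β - bier n k v1 β)
    let v : Finset ℕ → ℤ := fun A => if n + 1 ∈ A then v1 (A.erase (n + 1)) else v0 A
    have e1 : ∀ β, bier n k (fun A => v (insert (n + 1) A)) β = bier n k v1 β := by
      intro β
      apply Finset.sum_congr rfl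
      intro A hA
      simp [v, Finset.erase_insert (notMem_of_subset_Icc (mem_ksubsets.1 hA).1)]
    have e0 : ∀ β, bier n (k + 1) v β = bier n (k + 1) v0 β := by
      intro β
      apply Finset.sum_congr rfl
      intro A hA
      simp [v, notMem_of_subset_Icc (mem_ksubsets.1 hA).1]
    refine ⟨v, fun β hβ => ?_⟩
    rw [mem_stdLe] at hβ
    by_cases hm : n + 1 ∈ β
    · have hmem : β.erase (n + 1) ∈ stdLe n k := by
        rw [mem_stdLe]
        refine ⟨hsplit β hβ.1 hm, hβ.2.1.mono (Finset.erase_subset _ _), ?_⟩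
        rw [Finset.card_erase_of_mem hm]; omega
      have hb := bier_succ_insert (n := n) (k := k) v (Finset.notMem_erase (n + 1) β)
      rw [Finset.insert_erase hm] at hb
      rw [hb, e1, hv1 _ hmem, Finset.insert_erase hm]
    · have hmem : β ∈ stdLe n (k + 1) := mem_stdLe.2 ⟨hnosplit β hβ.1 hm, hβ.2⟩
      rw [bier_succ_of_notMem v hm, e1, e0, hv0 _ hmem]
      ring

/-- signed subset sum -/
def sgnSum (g : Finset ℕ → ℤ) (β : Finset ℕ) : ℤ :=
  ∑ γ ∈ β.powerset, (-1) ^ γ.card * g γ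

lemma sgnSum_insert (g : Finset ℕ → ℤ) {β : Finset ℕ} {x : ℕ} (hx : x ∉ β) :
    sgnSum g (insert x β) = sgnSum g β - sgnSum (fun γ => g (insert x γ)) β := by
  unfold sgnSum
  rw [Finset.sum_powerset_insert hx, sub_eq_add_neg, ← Finset.sum_neg_distrib]
  congr 1
  apply Finset.sum_congr rfl
  intro γ hγ
  rw [Finset.card_insert_of_notMem (fun h => hx (Finset.mem_powerset.1 hγ h))]
  ring

lemma sgnSum_sgnSum (β : Finset ℕ) : ∀ g : Finset ℕ → ℤ, sgnSum (sgnSum g) β = g β := by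
  induction β using Finset.induction_on with
  | empty => intro g; simp [sgnSum]
  | insert x β hx ih =>
    intro g
    rw [sgnSum_insert _ hx]
    have : sgnSum (fun γ => sgnSum g (insert x γ)) β =
        sgnSum (sgnSum g) β - sgnSum (sgnSum (fun γ => g (insert x γ))) β := by
      unfold sgnSum
      rw [← Finset.sum_sub_distrib]
      apply Finset.sum_congr rfl
      intro γ hγ
      have := sgnSum_insert g (β := γ) (x := x) (fun h => hx (Finset.mem_powerset.1 hγ h))
      unfold sgnSum at this
      simp only [this]; ring
    rw [this, ih (fun γ => g (insert x γ))]
    ring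

lemma sgnSum_compl {β B N : Finset ℕ} (hβ : β ⊆ N) :
    sgnSum (fun γ => if γ ⊆ N \ B then 1 else 0) β = if β ⊆ B then 1 else 0 := by
  have h := Finset.sum_powerset_neg_one_pow_card (x := β \ B)
  simp only [Finset.sdiff_eq_empty_iff_subset] at h
  rw [← h]
  unfold sgnSum
  simp only [mul_ite, mul_one, mul_zero]
  rw [← Finset.sum_filter]
  apply Finset.sum_congr _ (fun _ _ => rfl)
  ext γ
  simp only [Finset.mem_filter, Finset.mem_powerset, Finset.subset_sdiff]
  constructor
  · rintro ⟨h1, _, h2⟩; exact ⟨h1, h2⟩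
  · rintro ⟨h1, h2⟩; exact ⟨h1, h1.trans hβ, h2⟩

lemma compl_mem {n a b : ℕ} (hab : n = a + b) {A : Finset ℕ} (hA : A ∈ ksubsets n a) :
    Finset.Icc 1 n \ A ∈ ksubsets n b := by
  rw [mem_ksubsets] at *
  refine ⟨Finset.sdiff_subset, ?_⟩
  rw [Finset.card_sdiff_of_subset hA.1, Nat.card_Icc]; omega

lemma bier_compl {n a b : ℕ} (hab : n = a + b) (v : Finset ℕ → ℤ) {β : Finset ℕ}
    (hβ : β ⊆ Finset.Icc 1 n) :
    bier n a (fun A => v (Finset.Icc 1 n \ A)) β = sgnSum (bier n b v) β := by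
  have hba : n = b + a := by omega
  have e : ∀ γ, bier n b v γ = ∑ A ∈ ksubsets n a,
      (if γ ⊆ Finset.Icc 1 n \ A then 1 else 0) * v (Finset.Icc 1 n \ A) := by
    intro γ
    unfold bier
    refine Finset.sum_bij' (fun A _ => Finset.Icc 1 n \ A) (fun A _ => Finset.Icc 1 n \ A)
      (fun A hA => compl_mem hba hA) (fun A hA => compl_mem hab hA) ?_ ?_ ?_
    · intro A hA
      exact Finset.sdiff_sdiff_eq_self (mem_ksubsets.1 hA).1
    · intro A hA
      exact Finset.sdiff_sdiff_eq_self (mem_ksubsets.1 hA).1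
    · intro A hA
      simp only [Finset.sdiff_sdiff_eq_self (mem_ksubsets.1 hA).1]
      split_ifs <;> simp
  have e2 : sgnSum (bier n b v) β = ∑ A ∈ ksubsets n a,
      sgnSum (fun γ => if γ ⊆ Finset.Icc 1 n \ A then 1 else 0) β * v (Finset.Icc 1 n \ A) := by
    unfold sgnSum
    simp only [e, Finset.mul_sum, Finset.sum_mul]
    rw [Finset.sum_comm]
    simp only [mul_assoc]
  rw [e2]
  apply Finset.sum_congr rfl
  intro A _
  rw [sgnSum_compl hβ]
  split_ifs <;> simp

lemma good_mid {k : ℕ} (h : GoodPair (2 * k + 1) k) : GoodPair (2 * k + 1) (k + 1) := by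
  have hst : ∀ β, β ∈ stdLe (2 * k + 1) (k + 1) → β ∈ stdLe (2 * k + 1) k := by
    intro β hβ
    rw [mem_stdLe] at *
    have := hβ.2.1.two_card_le hβ.1
    exact ⟨hβ.1, hβ.2.1, by omega⟩
  have hst' : ∀ β γ, β ∈ stdLe (2 * k + 1) k → γ ⊆ β → γ ∈ stdLe (2 * k + 1) k := by
    intro β γ hβ hs
    rw [mem_stdLe] at *
    exact ⟨hs.trans hβ.1, hβ.2.1.mono hs, (Finset.card_le_card hs).trans hβ.2.2⟩
  have hup : ∀ β, β ∈ stdLe (2 * k + 1) k → β ∈ stdLe (2 * k + 1) (k + 1) := by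
    intro β hβ
    rw [mem_stdLe] at *
    exact ⟨hβ.1, hβ.2.1, by omega⟩
  constructor
  · intro v hv A hA
    have := h.1 (fun A => v (Finset.Icc 1 (2 * k + 1) \ A)) (by
      intro β hβ
      rw [bier_compl (b := k + 1) (by omega) v (mem_stdLe.1 hβ).1]
      apply Finset.sum_eq_zero
      intro γ hγ
      rw [hv γ (hup _ (hst' β γ hβ (Finset.mem_powerset.1 hγ))), mul_zero])
      _ (compl_mem (b := k) (by omega) hA)
    simpa only [Finset.sdiff_sdiff_eq_self (mem_ksubsets.1 hA).1] using this
  · intro f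
    obtain ⟨w, hw⟩ := h.2 (sgnSum f)
    refine ⟨fun A => w (Finset.Icc 1 (2 * k + 1) \ A), fun β hβ => ?_⟩
    rw [bier_compl (b := k) (by omega) w (mem_stdLe.1 hβ).1, ← sgnSum_sgnSum β f]
    apply Finset.sum_congr rfl
    intro γ hγ
    rw [hw γ (hst' β γ (hst β hβ) (Finset.mem_powerset.1 hγ))]

lemma good_all (n : ℕ) : ∀ k, 2 * k ≤ n + 1 → GoodPair n k := by
  induction n with
  | zero =>
    intro k hk
    obtain rfl : k = 0 := by omega
    exact good_zero 0
  | succ n ih =>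
    have hlow : ∀ k, 2 * k ≤ n + 1 → GoodPair (n + 1) k := by
      intro k hk
      cases k with
      | zero => exact good_zero _
      | succ k => exact good_step hk (ih _ hk) (ih _ (by omega))
    intro k hk
    by_cases hk' : 2 * k ≤ n + 1
    · exact hlow k hk'
    · obtain ⟨j, rfl⟩ : ∃ j, k = j + 1 := ⟨k - 1, by omega⟩
      obtain rfl : n = 2 * j := by omega
      exact good_mid (hlow j (by omega))

/-- The ℤ-linear map sending `v` (a function on `k`-subsets) to the function
`β ↦ Σ_{A a k-subset, β ⊆ A} v(A)` on standard `(≤ k)`-subsets is bijective;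
i.e. the Bier matrix `P_k` is square and unimodular. -/
theorem statement2 (n k : ℕ) (h : (n : ℤ) ≥ 2 * k - 1) :
    Function.Bijective fun (v : ↥(ksubsets n k) → ℤ) (β : ↥(stdLe n k)) =>
      ∑ A : ↥(ksubsets n k), if (β : Finset ℕ) ⊆ (A : Finset ℕ) then v A else 0 := by
  have hg := good_all n k (by omega)
  have hb : ∀ (w : Finset ℕ → ℤ) (β : Finset ℕ),
      (∑ A : ↥(ksubsets n k), if β ⊆ (A : Finset ℕ) then w A else 0) = bier n k w β := by
    intro w β
    exact Finset.sum_coe_sort (ksubsets n k) (fun A => if β ⊆ A then w A else 0)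
  constructor
  · intro v1 v2 hv
    have h0 := hg.1 (fun A => if hA : A ∈ ksubsets n k then v1 ⟨A, hA⟩ - v2 ⟨A, hA⟩ else 0) (by
      intro β hβ
      rw [← hb]
      have := congrFun hv ⟨β, hβ⟩
      simp only at this
      rw [← sub_eq_zero, ← Finset.sum_sub_distrib] at this
      refine Eq.trans ?_ this
      apply Finset.sum_congr rfl
      intro A _
      rw [dif_pos A.2]
      split_ifs <;> simp)
    funext A
    have := h0 A A.2
    simp only [A.2, dif_pos] at this
    exact sub_eq_zero.1 this
  · intro f
    obtain ⟨w, hw⟩ := hg.2 (fun β => if hβ : β ∈ stdLe n k then f ⟨β, hβ⟩ else 0)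
    refine ⟨fun A => w A, ?_⟩
    funext β
    have := hw β β.2
    rw [dif_pos β.2, ← hb] at this
    exact this
end

section
/- Let 0 ≤ i ≤ j be integers with 3j ≤ n + 1, and set μ_s = C(n,s) − C(n,s−1). Fix any bijections identifying the standard i-element subsets of {1,…,n} with {0,…,μ_i−1} and the standard j-element subsets with {0,…,μ_j−1}. Then there exist unimodular integer matrices E of size μ_i × μ_i and F of size μ_j × μ_j such that E · W_{i,j} · F = D_{i,j}, where D_{i,j} is the μ_i × μ_j matrix whose (t,t) entry equals C(j−s, i−s) for the unique s with μ_{s−1} ≤ t < μ_s (for 0 ≤ t < μ_i) and whose other entries are zero. In particular, W_{i,j} has a diagonal form whose nonzero diagonal entries are C(j−s, i−s) with multiplicity μ_s − μ_{s−1} for 0 ≤ s ≤ i. -/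
open scoped Classical

/-- Integer binomial coefficient with the convention `C x y = 0` unless `0 ≤ y ≤ x`. -/
noncomputable def C (x y : ℤ) : ℤ :=
  if 0 ≤ y ∧ y ≤ x then (x.toNat).choose y.toNat else 0

/-- `μ_s(n) = C(n,s) − C(n,s−1)` (so `μ_{−1} = 0`). -/
noncomputable def mu (n : ℕ) (s : ℤ) : ℤ := C n s - C n (s - 1)

/-- The standard `k`-element subsets of `{1,…,n}`. -/
noncomputable def stdSets (n k : ℕ) : Finset (Finset ℕ) :=
  (Finset.Icc 1 n).powerset.filter fun β => IsStandard β ∧ β.card = k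

/-- The standard inclusion matrix `W_{i,j}`. -/
noncomputable def W (n i j : ℕ) : Matrix ↥(stdSets n i) ↥(stdSets n j) ℤ :=
  Matrix.of fun α β => if (α : Finset ℕ) ⊆ (β : Finset ℕ) then 1 else 0

/-- The `μ_i × μ_j` diagonal matrix `D_{i,j}` whose `(t,t)` entry is `C(j−s,i−s)`
for the unique `s` with `μ_{s−1} ≤ t < μ_s`. -/
noncomputable def Dmat (n i j : ℕ) :
    Matrix (Fin (mu n i).toNat) (Fin (mu n j).toNat) ℤ :=
  Matrix.of fun t u =>
    if (t : ℕ) = (u : ℕ) then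
      ∑ s ∈ Finset.range (i + 1),
        if mu n ((s : ℤ) - 1) ≤ ((t : ℕ) : ℤ) ∧ ((t : ℕ) : ℤ) < mu n s then
          ((j - s).choose (i - s) : ℤ)
        else 0
    else 0

/-- Counting form of standardness. -/
def St (β : Finset ℕ) : Prop := ∀ k, 2 * (β.filter (· ≤ k)).card ≤ k

lemma sort_getD (β : Finset ℕ) (i : ℕ) (hi : i < β.card) :
    (β.sort (· ≤ ·)).getD i 0 = β.orderEmbOfFin rfl ⟨i, hi⟩ := by
  rw [Finset.orderEmbOfFin_apply, List.getD_eq_getElem]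
  rfl

lemma isStandard_iff_s9 (β : Finset ℕ) : IsStandard β ↔ St β := by
  constructor
  · intro h k
    by_contra hc
    push Not at hc
    set c := (β.filter (· ≤ k)).card with hcdef
    have hc0 : 0 < c := by omega
    have hcle : c ≤ β.card := Finset.card_filter_le _ _
    have h1 := h (c - 1) (by omega)
    rw [sort_getD β (c-1) (by omega)] at h1
    have hsub : β.filter (· ≤ k) ⊆
        (Finset.univ.filter (fun a : Fin β.card => (a : ℕ) < c - 1)).image
          (β.orderEmbOfFin rfl) := by
      intro b hb
      rw [Finset.mem_filter] at hb
      have hb1 : b ∈ Set.range (β.orderEmbOfFin rfl) := by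
        rw [Finset.range_orderEmbOfFin]; exact hb.1
      obtain ⟨a, rfl⟩ := hb1
      refine Finset.mem_image_of_mem _ ?_
      simp only [Finset.mem_filter, Finset.mem_univ, true_and]
      by_contra hac
      have : (⟨c - 1, by omega⟩ : Fin β.card) ≤ a := by
        rw [Fin.le_def]; simp only; omega
      have := (β.orderEmbOfFin rfl).monotone this
      omega
    have h2 := Finset.card_le_card hsub
    have h3 : ((Finset.univ.filter (fun a : Fin β.card => (a : ℕ) < c - 1)).image
          (β.orderEmbOfFin rfl)).card ≤ c - 1 := by
      refine Finset.card_image_le.trans ?_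
      have : (Finset.univ.filter (fun a : Fin β.card => (a : ℕ) < c - 1)).card ≤
          (Finset.range (c-1)).card := by
        refine Finset.card_le_card_of_injOn (fun a => (a : ℕ)) ?_ ?_
        · intro a ha; simpa using ha
        · intro a _ b _ hab; exact Fin.ext hab
      simpa using this
    omega
  · intro h i hi
    rw [sort_getD β i hi]
    refine le_trans ?_ (h (β.orderEmbOfFin rfl ⟨i, hi⟩))
    have : (Finset.univ : Finset (Fin (i+1))).card ≤
        (β.filter (· ≤ β.orderEmbOfFin rfl ⟨i, hi⟩)).card := by
      refine Finset.card_le_card_of_injOn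
        (fun a => β.orderEmbOfFin rfl ⟨a, by omega⟩) ?_ ?_
      · intro a _
        simp only [Finset.coe_filter, Set.mem_ofPred_eq]
        refine ⟨Finset.orderEmbOfFin_mem _ _ _, ?_⟩
        apply (β.orderEmbOfFin rfl).monotone
        rw [Fin.le_def]; simp only; omega
      · intro a _ b _ hab
        have := (β.orderEmbOfFin rfl).injective hab
        simpa [Fin.ext_iff] using this
    simp at this
    omega

lemma mem_std {n k : ℕ} {β : Finset ℕ} :
    β ∈ stdSets n k ↔ β ⊆ Finset.Icc 1 n ∧ St β ∧ β.card = k := by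
  simp [stdSets, isStandard_iff_s9]

lemma St.subset {α β : Finset ℕ} (h : St β) (hs : α ⊆ β) : St α := fun k =>
  (Nat.mul_le_mul_left 2 (Finset.card_le_card (Finset.filter_subset_filter _ hs))).trans (h k)

lemma std_empty {n k : ℕ} (h : n < 2 * k) : stdSets n k = ∅ := by
  rw [Finset.eq_empty_iff_forall_notMem]
  intro β hβ
  obtain ⟨h1, h2, h3⟩ := mem_std.1 hβ
  have := h2 n
  rw [Finset.filter_true_of_mem (fun x hx => (Finset.mem_Icc.1 (h1 hx)).2)] at this
  omega

lemma std_zero (n : ℕ) : stdSets n 0 = {∅} := by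
  ext β
  rw [mem_std, Finset.mem_singleton, Finset.card_eq_zero]
  constructor
  · exact fun h => h.2.2
  · rintro rfl
    simp [St]

lemma notMem_of_std {n k : ℕ} {β : Finset ℕ} (h : β ∈ stdSets n k) : n + 1 ∉ β := by
  intro hh
  have := (mem_std.1 h).1 hh
  simp at this

lemma std_succ {n j : ℕ} (h : 2 * (j + 1) ≤ n + 1) :
    stdSets (n + 1) (j + 1) = stdSets n (j + 1) ∪ (stdSets n j).image (insert (n + 1)) := by
  ext β
  simp only [Finset.mem_union, Finset.mem_image]
  constructor
  · intro hβ
    obtain ⟨h1, h2, h3⟩ := mem_std.1 hβ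
    by_cases hn : n + 1 ∈ β
    · right
      refine ⟨β.erase (n+1), mem_std.2 ⟨?_, h2.subset (Finset.erase_subset _ _), ?_⟩,
        Finset.insert_erase hn⟩
      · intro x hx
        rw [Finset.mem_erase] at hx
        have := Finset.mem_Icc.1 (h1 hx.2)
        rw [Finset.mem_Icc]; omega
      · rw [Finset.card_erase_of_mem hn]; omega
    · left
      refine mem_std.2 ⟨?_, h2, h3⟩
      intro x hx
      have := Finset.mem_Icc.1 (h1 hx)
      have : x ≠ n + 1 := fun e => hn (e ▸ hx)
      rw [Finset.mem_Icc]; omega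
  · rintro (hβ | ⟨γ, hγ, rfl⟩)
    · obtain ⟨h1, h2, h3⟩ := mem_std.1 hβ
      exact mem_std.2 ⟨h1.trans (Finset.Icc_subset_Icc_right (by omega)), h2, h3⟩
    · obtain ⟨h1, h2, h3⟩ := mem_std.1 hγ
      have hn := notMem_of_std hγ
      have hc : (insert (n+1) γ).card = j + 1 := by
        rw [Finset.card_insert_of_notMem hn, h3]
      refine mem_std.2 ⟨?_, ?_, hc⟩
      · refine Finset.insert_subset (by simp) (h1.trans (Finset.Icc_subset_Icc_right (by omega)))
      · intro k
        by_cases hk : n + 1 ≤ k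
        · have := Finset.card_filter_le (insert (n+1) γ) (· ≤ k)
          omega
        · rw [Finset.filter_insert, if_neg hk]
          exact h2 k

/-- The set families indexing the unimodular inclusion matrices. -/
noncomputable def SS : ℕ → ℕ → Finset (Finset ℕ)
  | 0, 0 => {∅}
  | 0, _ + 1 => ∅
  | n + 1, 0 => SS n 0
  | n + 1, j + 1 => if 2 * (j + 1) ≤ n + 1 then
      (SS n (j + 1) ∪ SS n j) ∪ (SS n (j + 1) ∩ SS n j).image (insert (n + 1)) else ∅

lemma SS_zero (n : ℕ) : SS n 0 = {∅} := by
  induction n with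
  | zero => simp [SS]
  | succ n ih => simp [SS, ih]

lemma SS_succ {n j : ℕ} (h : 2 * (j + 1) ≤ n + 1) : SS (n+1) (j+1) =
    (SS n (j + 1) ∪ SS n j) ∪ (SS n (j + 1) ∩ SS n j).image (insert (n + 1)) := by
  simp [SS, h]

lemma SS_empty {n j : ℕ} (h : n < 2 * j) : SS n j = ∅ := by
  rcases n with _ | n <;> rcases j with _ | j
  · omega
  · simp [SS]
  · omega
  · rw [SS, if_neg (by omega)]

lemma SS_lt (n : ℕ) : ∀ j, ∀ α ∈ SS n j, ∀ x ∈ α, x ≤ n := by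
  induction n with
  | zero =>
    intro j α hα x hx
    rcases j with _ | j
    · rw [SS_zero, Finset.mem_singleton] at hα; subst hα; simp at hx
    · simp [SS] at hα
  | succ n ih =>
    intro j α hα x hx
    rcases j with _ | j
    · rw [SS_zero, Finset.mem_singleton] at hα; subst hα; simp at hx
    · rw [SS] at hα
      split_ifs at hα
      · simp only [Finset.mem_union, Finset.mem_image, Finset.mem_inter] at hα
        rcases hα with (h | h) | ⟨γ, h, rfl⟩
        · have := ih _ _ h x hx; omega
        · have := ih _ _ h x hx; omega
        · rcases Finset.mem_insert.1 hx with h1 | h1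
          · omega
          · have := ih _ _ h.1 x h1; omega
      · simp at hα

lemma SS_notMem {n j : ℕ} {α : Finset ℕ} (h : α ∈ SS n j) : n + 1 ∉ α := by
  intro hh
  have := SS_lt n j α h _ hh
  omega

lemma insert_injOn {x : ℕ} {A : Finset (Finset ℕ)} (h : ∀ α ∈ A, x ∉ α) :
    Set.InjOn (insert x) (A : Set (Finset ℕ)) := by
  intro α hα β hβ hab
  have := congrArg (fun s => Finset.erase s x) hab
  simpa [Finset.erase_insert (h α hα), Finset.erase_insert (h β hβ)] using this

lemma card_step {x : ℕ} {A B : Finset (Finset ℕ)} (hA : ∀ α ∈ A, x ∉ α) (hB : ∀ α ∈ B, x ∉ α) :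
    (A ∪ B.image (insert x)).card = A.card + B.card := by
  rw [Finset.card_union_of_disjoint, Finset.card_image_of_injOn (insert_injOn hB)]
  rw [Finset.disjoint_left]
  intro a ha ha'
  obtain ⟨γ, _, rfl⟩ := Finset.mem_image.1 ha'
  exact hA _ ha (Finset.mem_insert_self _ _)

lemma std_card_succ {n j : ℕ} (h : 2 * (j + 1) ≤ n + 1) :
    (stdSets (n+1) (j+1)).card = (stdSets n (j+1)).card + (stdSets n j).card := by
  rw [std_succ h]
  exact card_step (fun α h => notMem_of_std h) (fun α h => notMem_of_std h)

lemma SS_card (n : ℕ) : ∀ j, (SS n j).card = (stdSets n j).card := by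
  induction n with
  | zero =>
    intro j
    rcases j with _ | j
    · rw [SS_zero, std_zero]
    · rw [SS_empty (by omega), std_empty (by omega)]
  | succ n ih =>
    intro j
    rcases j with _ | j
    · rw [SS_zero, std_zero]
    · by_cases h : 2 * (j + 1) ≤ n + 1
      · rw [std_card_succ h, SS_succ h, card_step, Finset.card_union_add_card_inter, ih, ih]
        · intro α hα
          rcases Finset.mem_union.1 hα with h | h <;> exact SS_notMem h
        · intro α hα
          exact SS_notMem (Finset.mem_inter.1 hα).1
      · rw [SS_empty (by omega), std_empty (by omega)]

/-- `μ` with natural binomials. -/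
lemma mu_zero (n : ℕ) : mu n 0 = 1 := by simp [mu, C]

lemma C_nat (n k : ℕ) : C n k = (n.choose k : ℤ) := by
  unfold C
  split_ifs with h
  · simp
  · rw [Nat.choose_eq_zero_of_lt (by omega)]; simp

lemma mu_succ (n k : ℕ) : mu n ((k + 1 : ℕ) : ℤ) = (n.choose (k+1) : ℤ) - n.choose k := by
  unfold mu
  rw [C_nat, show (((k+1 : ℕ) : ℤ) - 1) = (k : ℕ) by push_cast; ring, C_nat]

lemma std_card (n : ℕ) : ∀ j, 2 * j ≤ n + 1 → ((stdSets n j).card : ℤ) = mu n j := by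
  induction n with
  | zero =>
    intro j hj
    have : j = 0 := by omega
    subst this
    rw [std_zero]; simp [mu_zero]
  | succ n ih =>
    intro j hj
    rcases j with _ | j
    · rw [std_zero]; simp [mu_zero]
    · by_cases h : 2 * (j + 1) ≤ n + 1
      · rw [std_card_succ h]
        push_cast
        rw [ih (j+1) h, ih j (by omega), mu_succ, ← Nat.cast_succ, mu_succ]
        rcases j with _ | j
        · simp [mu_zero]
        · rw [mu_succ, Nat.choose_succ_succ n (j+1), Nat.choose_succ_succ n j]
          push_cast; ring
      · rw [std_empty (by omega), mu_succ]
        have hn : n + 1 = 2 * j + 1 := by omega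
        rw [hn, Nat.choose_symm_half]; simp


lemma SS_card_le (n : ℕ) : ∀ j, ∀ α ∈ SS n j, α.card ≤ j := by
  induction n with
  | zero =>
    intro j α hα
    rcases j with _ | j
    · rw [SS_zero, Finset.mem_singleton] at hα; subst hα; simp
    · simp [SS] at hα
  | succ n ih =>
    intro j α hα
    rcases j with _ | j
    · rw [SS_zero, Finset.mem_singleton] at hα; subst hα; simp
    · rw [SS] at hα
      split_ifs at hα
      · simp only [Finset.mem_union, Finset.mem_image, Finset.mem_inter] at hα
        rcases hα with (h | h) | ⟨γ, h, rfl⟩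
        · exact ih _ _ h
        · have := ih _ _ h; omega
        · have := ih _ _ h.2
          have := Finset.card_insert_le (n+1) γ
          omega
      · simp at hα

lemma SS_subset (n : ℕ) : ∀ a j, a ≤ j → 2 * j + a ≤ n → SS n a ⊆ SS n j := by
  induction n with
  | zero =>
    intro a j h1 h2
    have : a = j := by omega
    rw [this]
  | succ n ih =>
    intro a j h1 h2
    rcases a with _ | a
    · rcases j with _ | j
      · exact subset_rfl
      · rw [SS_succ (by omega), SS_zero, ← SS_zero n]
        exact (ih 0 j (by omega) (by omega)).trans
          (Finset.subset_union_right.trans Finset.subset_union_left)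
    · rcases j with _ | j
      · omega
      · rw [SS_succ (by omega), SS_succ (by omega)]
        have e1 : SS n a ⊆ SS n j := ih a j (by omega) (by omega)
        have e2 : SS n a ⊆ SS n (j+1) := ih a (j+1) (by omega) (by omega)
        have e3 : SS n (a+1) ⊆ SS n (j+1) ∪ SS n j := by
          rcases Nat.lt_or_ge a j with h | h
          · exact (ih (a+1) j (by omega) (by omega)).trans Finset.subset_union_right
          · have : a = j := by omega
            subst this
            exact Finset.subset_union_left
        refine Finset.union_subset_union (Finset.union_subset e3
          (e1.trans Finset.subset_union_right)) (Finset.image_subset_image ?_)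
        exact Finset.inter_subset_right.trans (Finset.subset_inter e2 e1)

/-- Lexicographic key. -/
noncomputable def key : ℕ → Finset ℕ → ℕ
  | 0, _ => 0
  | n + 1, v => 2 * key n v + if n + 1 ∈ v then 1 else 0

lemma key_insert (n : ℕ) (m : ℕ) (h : n < m) (v : Finset ℕ) :
    key n (insert m v) = key n v := by
  induction n with
  | zero => rfl
  | succ n ih =>
    have : n + 1 ≠ m := by omega
    simp [key, ih (by omega), this]

/-- Monomial function on `F`. -/
noncomputable def mono (F : Finset (Finset ℕ)) (α : Finset ℕ) : Finset ℕ → ℤ :=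
  fun β => if β ∈ F ∧ α ⊆ β then 1 else 0

/-- Span of lower monomials. -/
noncomputable def Low (n : ℕ) (F : Finset (Finset ℕ)) (k : ℕ) : Submodule ℤ (Finset ℕ → ℤ) :=
  Submodule.span ℤ (mono F '' {v | (∀ y ∈ v, y ≤ n) ∧ key n v < k})

lemma mono_empty (α : Finset ℕ) : mono ∅ α = 0 := by
  ext β; simp [mono]

/-- Shift of functions along insertion of `x`. -/
noncomputable def shiftL (x : ℕ) : (Finset ℕ → ℤ) →ₗ[ℤ] (Finset ℕ → ℤ) where
  toFun g := fun β => if x ∈ β then g (β.erase x) else 0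
  map_add' f g := by ext β; simp only [Pi.add_apply]; split_ifs <;> simp
  map_smul' c g := by ext β; simp

lemma mono_F0 {n j : ℕ} (h : 2 * (j + 1) ≤ n + 1) (α : Finset ℕ) :
    mono (stdSets n (j+1)) α =
      mono (stdSets (n+1) (j+1)) α - mono (stdSets (n+1) (j+1)) (insert (n+1) α) ∨
      n + 1 ∈ α := by
  by_cases hα : n + 1 ∈ α
  · exact Or.inr hα
  left
  ext β
  simp only [mono, Pi.sub_apply, Finset.insert_subset_iff]
  simp only [std_succ h, Finset.mem_union, Finset.mem_image]
  by_cases hx : n + 1 ∈ β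
  · have h1 : β ∉ stdSets n (j+1) := fun hh => notMem_of_std hh hx
    simp [hx, h1]
  · have h2 : ¬ ∃ a ∈ stdSets n j, insert (n+1) a = β := by
      rintro ⟨a, _, rfl⟩
      exact hx (Finset.mem_insert_self _ _)
    simp only [h2, or_false, hx, false_and, and_false, if_false, sub_zero]

lemma mono_F1 {n j : ℕ} (h : 2 * (j + 1) ≤ n + 1) (α : Finset ℕ) (hα : n + 1 ∉ α) :
    shiftL (n+1) (mono (stdSets n j) α) = mono (stdSets (n+1) (j+1)) (insert (n+1) α) := by
  ext β
  simp only [shiftL, mono, LinearMap.coe_mk, AddHom.coe_mk, Finset.insert_subset_iff]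
  simp only [std_succ h, Finset.mem_union, Finset.mem_image]
  by_cases hx : n + 1 ∈ β
  · have h1 : β ∉ stdSets n (j+1) := fun hh => notMem_of_std hh hx
    have h2 : (∃ a ∈ stdSets n j, insert (n+1) a = β) ↔ β.erase (n+1) ∈ stdSets n j := by
      constructor
      · rintro ⟨a, ha, rfl⟩
        rwa [Finset.erase_insert (notMem_of_std ha)]
      · intro hh
        exact ⟨_, hh, Finset.insert_erase hx⟩
    have h3 : α ⊆ β.erase (n+1) ↔ α ⊆ β := by
      rw [Finset.subset_erase]; simp [hα]
    simp only [h1, h2, h3, hx, false_or, true_and, if_true]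
  · simp [hx]

lemma mem_Low {n : ℕ} {F : Finset (Finset ℕ)} {k : ℕ} {v : Finset ℕ} (h1 : ∀ y ∈ v, y ≤ n)
    (h2 : key n v < k) : mono F v ∈ Low n F k :=
  Submodule.subset_span ⟨v, ⟨h1, h2⟩, rfl⟩

lemma notMem_of_le {n : ℕ} {v : Finset ℕ} (h : ∀ y ∈ v, y ≤ n) : n + 1 ∉ v := by
  intro hh; have := h _ hh; omega

lemma key_of_le {n : ℕ} {v : Finset ℕ} (h : ∀ y ∈ v, y ≤ n) : key (n+1) v = 2 * key n v := by
  simp [key, notMem_of_le h]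

lemma key_ins {n : ℕ} (v : Finset ℕ) :
    key (n+1) (insert (n+1) v) = 2 * key n v + 1 := by
  simp [key, key_insert n (n+1) (by omega) v]

lemma ins_le {n : ℕ} {v : Finset ℕ} (h : ∀ y ∈ v, y ≤ n) :
    ∀ y ∈ insert (n+1) v, y ≤ n + 1 := by
  intro y hy
  rcases Finset.mem_insert.1 hy with h1 | h1
  · omega
  · have := h y h1; omega

lemma Low_F0 {n j : ℕ} (h : 2 * (j + 1) ≤ n + 1) (k k' : ℕ) (hk : 2 * k ≤ k') :
    Low n (stdSets n (j+1)) k ≤ Low (n+1) (stdSets (n+1) (j+1)) k' := by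
  unfold Low
  rw [Submodule.span_le]
  rintro _ ⟨v, ⟨h1, h2⟩, rfl⟩
  have := (mono_F0 h v).resolve_right (notMem_of_le h1)
  rw [this]
  refine Submodule.sub_mem _ ?_ ?_
  · exact mem_Low (fun y hy => (h1 y hy).trans (by omega)) (by rw [key_of_le h1]; omega)
  · exact mem_Low (ins_le h1) (by rw [key_ins]; omega)

lemma Low_F1 {n j : ℕ} (h : 2 * (j + 1) ≤ n + 1) (k k' : ℕ) (hk : 2 * k ≤ k')
    {g : Finset ℕ → ℤ} (hg : g ∈ Low n (stdSets n j) k) :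
    shiftL (n+1) g ∈ Low (n+1) (stdSets (n+1) (j+1)) k' := by
  have : Low n (stdSets n j) k ≤ (Low (n+1) (stdSets (n+1) (j+1)) k').comap (shiftL (n+1)) := by
    conv_lhs => unfold Low
    rw [Submodule.span_le]
    rintro _ ⟨v, ⟨h1, h2⟩, rfl⟩
    rw [SetLike.mem_coe, Submodule.mem_comap, mono_F1 h v (notMem_of_le h1)]
    exact mem_Low (ins_le h1) (by rw [key_ins]; omega)
  exact this hg

lemma reduce (n : ℕ) : ∀ j w, (∀ y ∈ w, y ≤ n) → w ∉ SS n j →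
    mono (stdSets n j) w ∈ Low n (stdSets n j) (key n w) := by
  have hzero : ∀ n w, w ∉ SS n 0 → mono (stdSets n 0) w = 0 := by
    intro n w hw
    rw [SS_zero, Finset.mem_singleton] at hw
    ext β
    simp only [mono, std_zero, Finset.mem_singleton, Pi.zero_apply]
    rw [if_neg]
    rintro ⟨rfl, h⟩
    exact hw (Finset.subset_empty.1 h)
  induction n with
  | zero =>
    intro j w _ hS
    rcases j with _ | j
    · rw [hzero _ _ hS]; exact Submodule.zero_mem _
    · rw [std_empty (by omega), mono_empty]; exact Submodule.zero_mem _
  | succ n ih =>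
    intro j w hw hS
    rcases j with _ | j
    · rw [hzero _ _ hS]; exact Submodule.zero_mem _
    by_cases h : 2 * (j + 1) ≤ n + 1
    swap
    · rw [std_empty (by omega), mono_empty]; exact Submodule.zero_mem _
    rw [SS_succ h] at hS
    simp only [Finset.mem_union, Finset.mem_image, Finset.mem_inter, not_or, not_exists] at hS
    by_cases hx : n + 1 ∈ w
    · obtain ⟨v, hv, rfl⟩ : ∃ v, n + 1 ∉ v ∧ insert (n+1) v = w :=
        ⟨w.erase (n+1), Finset.notMem_erase _ _, Finset.insert_erase hx⟩
      have hvn : ∀ y ∈ v, y ≤ n := by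
        intro y hy
        have h1 := hw y (Finset.mem_insert_of_mem hy)
        have : y ≠ n + 1 := fun e => hv (e ▸ hy)
        omega
      have hor : v ∉ SS n (j+1) ∨ v ∉ SS n j := by
        by_contra hc
        push Not at hc
        exact hS.2 v ⟨hc, rfl⟩
      rcases hor with hA | hB
      · have h0 := (mono_F0 h v).resolve_right hv
        have h1 := Low_F0 h (key n v) (key (n+1) (insert (n+1) v)) (by rw [key_ins]; omega)
          (ih _ v hvn hA)
        have h2 : mono (stdSets (n+1) (j+1)) (insert (n+1) v) =
            mono (stdSets (n+1) (j+1)) v - mono (stdSets n (j+1)) v := by rw [h0]; abel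
        rw [h2]
        refine Submodule.sub_mem _ (mem_Low (fun y hy => (hvn y hy).trans (by omega)) ?_) h1
        rw [key_of_le hvn, key_ins]; omega
      · rw [← mono_F1 h v hv]
        exact Low_F1 h (key n v) _ (by rw [key_ins]; omega) (ih _ v hvn hB)
    · have hvn : ∀ y ∈ w, y ≤ n := by
        intro y hy
        have h1 := hw y hy
        have : y ≠ n + 1 := fun e => hx (e ▸ hy)
        omega
      have h0 := (mono_F0 h w).resolve_right hx
      have h2 : mono (stdSets (n+1) (j+1)) w = mono (stdSets n (j+1)) w +
          shiftL (n+1) (mono (stdSets n j) w) := by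
        rw [mono_F1 h w hx, h0]; abel
      rw [h2]
      refine Submodule.add_mem _ (Low_F0 h (key n w) _ ?_ (ih _ w hvn hS.1.1))
        (Low_F1 h (key n w) _ ?_ (ih _ w hvn hS.1.2)) <;> rw [key_of_le hvn]


lemma span_SS (n j : ℕ) : ∀ k w, key n w < k → (∀ y ∈ w, y ≤ n) →
    mono (stdSets n j) w ∈ Submodule.span ℤ (mono (stdSets n j) '' (SS n j : Set (Finset ℕ))) := by
  intro k
  induction k with
  | zero => intro w h; omega
  | succ k ih =>
    intro w hk hw
    by_cases hS : w ∈ SS n j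
    · exact Submodule.subset_span ⟨w, hS, rfl⟩
    · have h1 := reduce n j w hw hS
      have h2 : Low n (stdSets n j) (key n w) ≤
          Submodule.span ℤ (mono (stdSets n j) '' (SS n j : Set (Finset ℕ))) := by
        unfold Low
        rw [Submodule.span_le]
        rintro _ ⟨v, ⟨hv1, hv2⟩, rfl⟩
        exact ih v (by omega) hv1
      exact h2 h1

/-- Every integer function on the standard sets is a combination of monomials in `SS`. -/
lemma rep_mono (n j : ℕ) (w : Finset ℕ) (hw : ∀ y ∈ w, y ≤ n) : ∃ c : Finset ℕ → ℤ,
    ∀ β ∈ stdSets n j, (if w ⊆ β then (1 : ℤ) else 0) =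
      ∑ α ∈ SS n j, c α * (if α ⊆ β then 1 else 0) := by
  have h := span_SS n j _ w (Nat.lt_succ_self _) hw
  rw [Submodule.mem_span_image_finset_iff_exists_fun] at h
  obtain ⟨c, hc⟩ := h
  refine ⟨fun α => if hα : α ∈ SS n j then c ⟨α, hα⟩ else 0, fun β hβ => ?_⟩
  have := congrFun hc β
  rw [← Finset.sum_coe_sort]
  simp only [Finset.sum_apply, Pi.smul_apply, mono, hβ, true_and, smul_eq_mul] at this
  rw [← this]
  refine Finset.sum_congr rfl fun x _ => ?_
  simp only [x.2, dif_pos]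

lemma std_le {n j : ℕ} {β : Finset ℕ} (h : β ∈ stdSets n j) : ∀ y ∈ β, y ≤ n :=
  fun _ hy => (Finset.mem_Icc.1 ((mem_std.1 h).1 hy)).2

/-- Left inverse of the inclusion matrix. -/
lemma exists_inv (n j N : ℕ) (e : ↥(stdSets n j) ≃ Fin N) (φ : Fin N → Finset ℕ)
    (hφ : Function.Injective φ) (hS : ∀ t, φ t ∈ SS n j) :
    ∃ G : Matrix (Fin N) (Fin N) ℤ,
      G * (Matrix.of fun t u => if φ t ⊆ (e.symm u : Finset ℕ) then (1 : ℤ) else 0) = 1 := by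
  have hN : (stdSets n j).card = N := by
    have := Fintype.card_congr e
    simpa using this
  have himg : Finset.univ.image φ = SS n j := by
    refine Finset.eq_of_subset_of_card_le ?_ ?_
    · intro x hx
      obtain ⟨t, _, rfl⟩ := Finset.mem_image.1 hx
      exact hS t
    · rw [Finset.card_image_of_injective _ hφ, SS_card, hN]; simp
  choose c hc using fun u : Fin N => rep_mono n j (e.symm u) (std_le (e.symm u).2)
  refine ⟨Matrix.of fun u t => c u (φ t), ?_⟩
  ext u v
  have h1 := hc u (e.symm v) (e.symm v).2
  rw [← himg, Finset.sum_image (fun a _ b _ h => hφ h)] at h1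
  rw [Matrix.mul_apply]
  simp only [Matrix.of_apply]
  rw [← h1, Matrix.one_apply]
  by_cases huv : u = v
  · simp [huv]
  · rw [if_neg huv, if_neg]
    intro hsub
    apply huv
    have h2 := (mem_std.1 (e.symm u).2).2.2
    have h3 := (mem_std.1 (e.symm v).2).2.2
    have := Finset.eq_of_subset_of_card_le hsub (by omega)
    exact e.symm.injective (Subtype.ext this)

lemma indep (n j : ℕ) (d : Finset ℕ → ℤ)
    (h : ∀ β ∈ stdSets n j, ∑ α ∈ SS n j, d α * (if α ⊆ β then 1 else 0) = 0) :
    ∀ α ∈ SS n j, d α = 0 := by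
  let e : ↥(stdSets n j) ≃ Fin (stdSets n j).card := (stdSets n j).equivFin
  let e' : ↥(SS n j) ≃ Fin (stdSets n j).card := (SS n j).equivFinOfCardEq (SS_card n j)
  obtain ⟨G, hG⟩ := exists_inv n j _ e (fun t => (e'.symm t : Finset ℕ))
    (fun a b hab => e'.symm.injective (Subtype.ext hab)) (fun t => (e'.symm t).2)
  rw [mul_eq_one_comm] at hG
  set M : Matrix (Fin (stdSets n j).card) (Fin (stdSets n j).card) ℤ :=
    Matrix.of fun t u => if (e'.symm t : Finset ℕ) ⊆ (e.symm u : Finset ℕ) then (1 : ℤ) else 0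
    with hM
  have h0 : Matrix.vecMul (fun t => d (e'.symm t)) M = 0 := by
    ext u
    have := h (e.symm u) (e.symm u).2
    rw [← Finset.sum_coe_sort, ← e'.symm.sum_comp] at this
    simpa [Matrix.vecMul, dotProduct, hM] using this
  have h1 : Matrix.vecMul (Matrix.vecMul (fun t => d (e'.symm t)) M) G = 0 := by
    rw [h0, Matrix.zero_vecMul]
  rw [Matrix.vecMul_vecMul, hG, Matrix.vecMul_one] at h1
  intro α hα
  have := congrFun h1 (e' ⟨α, hα⟩)
  simpa using this

/-- Number of standard sets between two sets. -/
lemma between (n i j : ℕ) (hij : i ≤ j) (α β : Finset ℕ) (hβ : β ∈ stdSets n j)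
    (hα : α.card ≤ i) :
    ∑ γ ∈ stdSets n i, (if α ⊆ γ then (1 : ℤ) else 0) * (if γ ⊆ β then 1 else 0) =
      ((j - α.card).choose (i - α.card) : ℤ) * (if α ⊆ β then 1 else 0) := by
  obtain ⟨h1, h2, h3⟩ := mem_std.1 hβ
  by_cases hab : α ⊆ β
  · rw [if_pos hab, mul_one]
    have e1 : ∀ γ, (if α ⊆ γ then (1 : ℤ) else 0) * (if γ ⊆ β then 1 else 0) =
        if α ⊆ γ ∧ γ ⊆ β then 1 else 0 := by
      intro γ; by_cases h4 : α ⊆ γ <;> by_cases h5 : γ ⊆ β <;> simp [h4, h5]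
    simp only [e1]
    rw [Finset.sum_boole]
    norm_cast
    rw [← h3, ← Finset.card_sdiff_of_subset hab, ← Finset.card_powersetCard]
    symm
    refine Finset.card_bij (fun δ _ => α ∪ δ) ?_ ?_ ?_
    · intro δ hδ
      obtain ⟨h4, h5⟩ := Finset.mem_powersetCard.1 hδ
      have h6 : α ∪ δ ⊆ β := Finset.union_subset hab (h4.trans Finset.sdiff_subset)
      refine Finset.mem_filter.2 ⟨mem_std.2 ⟨h6.trans h1, h2.subset h6, ?_⟩,
        Finset.subset_union_left, h6⟩
      rw [Finset.card_union_of_disjoint, h5]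
      · omega
      · exact (Finset.disjoint_sdiff).mono_right h4
    · intro δ hδ ε hε hh
      have h4 := (Finset.mem_powersetCard.1 hδ).1
      have h5 := (Finset.mem_powersetCard.1 hε).1
      ext x
      have h6 := Finset.ext_iff.1 hh x
      simp only [Finset.mem_union] at h6
      constructor
      · intro hx
        have := Finset.mem_sdiff.1 (h4 hx)
        tauto
      · intro hx
        have := Finset.mem_sdiff.1 (h5 hx)
        tauto
    · intro γ hγ
      obtain ⟨h4, h5, h6⟩ := Finset.mem_filter.1 hγ
      refine ⟨γ \ α, Finset.mem_powersetCard.2 ⟨Finset.sdiff_subset_sdiff h6 subset_rfl, ?_⟩, ?_⟩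
      · rw [Finset.card_sdiff_of_subset h5, (mem_std.1 h4).2.2]
      · exact Finset.union_sdiff_of_subset h5
  · rw [if_neg hab, mul_zero]
    refine Finset.sum_eq_zero fun γ _ => ?_
    by_cases h4 : α ⊆ γ
    · rw [if_neg (fun h5 => hab (h4.trans h5)), mul_zero]
    · rw [if_neg h4, zero_mul]

lemma drop (n j : ℕ) (h : 3 * (j + 1) ≤ n + 1) (α : Finset ℕ) (hα : α ∈ SS n (j+1))
    (hc : α.card ≤ j) : α ∈ SS n j := by
  by_contra hno
  have hsub : SS n j ⊆ SS n (j+1) := SS_subset n j (j+1) (by omega) (by omega)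
  obtain ⟨c, hcc⟩ := rep_mono n j α (SS_lt n _ α hα)
  have key1 : ∀ β ∈ stdSets n (j+1),
      ((j + 1 - α.card).choose (j - α.card) : ℤ) * (if α ⊆ β then 1 else 0) =
      ∑ γ ∈ SS n j, (c γ * ((j + 1 - γ.card).choose (j - γ.card) : ℤ)) *
        (if γ ⊆ β then 1 else 0) := by
    intro β hβ
    rw [← between n j (j+1) (by omega) α β hβ hc]
    rw [Finset.sum_congr rfl (fun δ hδ => by rw [hcc δ hδ])]
    simp only [Finset.sum_mul]
    rw [Finset.sum_comm]
    refine Finset.sum_congr rfl fun γ hγ => ?_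
    rw [mul_assoc, ← between n j (j+1) (by omega) γ β hβ (SS_card_le n j γ hγ), Finset.mul_sum]
    exact Finset.sum_congr rfl fun δ _ => by ring
  have := indep n (j+1) (fun γ => (if γ = α then ((j + 1 - α.card).choose (j - α.card) : ℤ) else 0)
    - if γ ∈ SS n j then (c γ * ((j + 1 - γ.card).choose (j - γ.card) : ℤ)) else 0) (by
      intro β hβ
      simp only [sub_mul, Finset.sum_sub_distrib, ite_mul, zero_mul]
      rw [Finset.sum_ite_eq' , if_pos hα, ← Finset.sum_filter, Finset.filter_mem_eq_inter,
        Finset.inter_eq_right.2 hsub, key1 β hβ, sub_self]) α hα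
  simp only [if_true, hno, if_false, sub_zero] at this
  have hpos : 0 < (j + 1 - α.card).choose (j - α.card) := Nat.choose_pos (by omega)
  norm_cast at this
  omega

lemma mem_SS_iff (n j : ℕ) (h : 3 * j ≤ n + 1) (s : ℕ) (hs : s ≤ j) (α : Finset ℕ)
    (hα : α ∈ SS n j) : α ∈ SS n s ↔ α.card ≤ s := by
  refine ⟨SS_card_le n s α, fun hc => ?_⟩
  induction j, hs using Nat.le_induction with
  | base => exact hα
  | succ j hsj ih => exact ih (by omega) (drop n j h α hα (by omega))

lemma det_of_inv {N : ℕ} {G M : Matrix (Fin N) (Fin N) ℤ} (h : G * M = 1) :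
    (G.det = 1 ∨ G.det = -1) ∧ (M.det = 1 ∨ M.det = -1) := by
  have h1 := congrArg Matrix.det h
  rw [Matrix.det_mul, Matrix.det_one] at h1
  exact ⟨Int.isUnit_iff.1 (IsUnit.of_mul_eq_one _ h1),
    Int.isUnit_iff.1 (IsUnit.of_mul_eq_one _ (by rw [mul_comm]; exact h1))⟩

/-- Enumeration of `SS n j` by size. -/
lemma exists_enum (n j N : ℕ) (h : 3 * j ≤ n + 1) (hN : (stdSets n j).card = N) :
    ∃ φ : Fin N → Finset ℕ, Function.Injective φ ∧ (∀ t, φ t ∈ SS n j) ∧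
      ∀ s ≤ j, ∀ t : Fin N, ((t : ℕ) : ℤ) < mu n s ↔ (φ t).card ≤ s := by
  let e' : ↥(SS n j) ≃ Fin N := (SS n j).equivFinOfCardEq ((SS_card n j).trans hN)
  let f : Fin N → ℕ := fun t => (e'.symm t : Finset ℕ).card
  let σ := Tuple.sort f
  have hmono : Monotone (f ∘ σ) := Tuple.monotone_sort f
  refine ⟨fun t => (e'.symm (σ t) : Finset ℕ), ?_, ?_, ?_⟩
  · intro a b hab
    exact σ.injective (e'.symm.injective (Subtype.ext hab))
  · intro t; exact (e'.symm _).2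
  · intro s hs t
    have h1 := Tuple.lt_card_le_iff_apply_le_of_monotone (j := t) (a := s) hmono
    have h2 : Fintype.card {i // (f ∘ σ) i ≤ s} = (SS n s).card := by
      rw [← Fintype.card_coe]
      refine Fintype.card_congr ?_
      refine Equiv.ofBijective (fun i => ⟨(e'.symm (σ i.1) : Finset ℕ),
        (mem_SS_iff n j h s hs _ (e'.symm _).2).2 i.2⟩) ⟨?_, ?_⟩
      · intro a b hab
        have := congrArg Subtype.val hab
        exact Subtype.ext (σ.injective (e'.symm.injective (Subtype.ext this)))
      · rintro ⟨α, hα⟩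
        have hα' : α ∈ SS n j := by
          rcases Nat.eq_or_lt_of_le hs with h3 | h3
          · rwa [← h3]
          · exact SS_subset n s j hs (by omega) hα
        refine ⟨⟨σ.symm (e' ⟨α, hα'⟩), ?_⟩, ?_⟩
        · simp [f, SS_card_le n s α hα]
        · simp
    rw [← Fintype.card_subtype, h2, SS_card] at h1
    rw [← std_card n s (by omega)]
    rw [Nat.cast_lt]
    exact h1

/-- Under any identification of the standard `i`- resp. `j`-subsets with
`{0,…,μ_i−1}` resp. `{0,…,μ_j−1}`, there are unimodular `E`, `F` with
`E · W_{i,j} · F = D_{i,j}`. -/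
theorem statement9 (n i j : ℕ) (hij : i ≤ j) (h : 3 * j ≤ n + 1)
    (eI : ↥(stdSets n i) ≃ Fin (mu n i).toNat)
    (eJ : ↥(stdSets n j) ≃ Fin (mu n j).toNat) :
    ∃ (E : Matrix (Fin (mu n i).toNat) (Fin (mu n i).toNat) ℤ)
      (F : Matrix (Fin (mu n j).toNat) (Fin (mu n j).toNat) ℤ),
      (E.det = 1 ∨ E.det = -1) ∧ (F.det = 1 ∨ F.det = -1) ∧
      E * (Matrix.of fun t u => W n i j (eI.symm t) (eJ.symm u)) * F = Dmat n i j := by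
  have hNi : (stdSets n i).card = (mu n i).toNat := by simpa using Fintype.card_congr eI
  have hNj : (stdSets n j).card = (mu n j).toNat := by simpa using Fintype.card_congr eJ
  obtain ⟨φ, hφ, hS, hlt⟩ := exists_enum n j _ h hNj
  have hsub : SS n i ⊆ SS n j := by
    rcases Nat.eq_or_lt_of_le hij with h3 | h3
    · rw [h3]
    · exact SS_subset n i j hij (by omega)
  have hle : (mu n i).toNat ≤ (mu n j).toNat := by
    rw [← hNi, ← hNj, ← SS_card, ← SS_card]
    exact Finset.card_le_card hsub
  let ψ : Fin (mu n i).toNat → Finset ℕ := fun t => φ (Fin.castLE hle t)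
  have hψ : Function.Injective ψ := fun a b hab => Fin.castLE_injective hle (hφ hab)
  have hψc : ∀ t, (ψ t).card ≤ i := by
    intro t
    refine (hlt i hij (Fin.castLE hle t)).1 ?_
    have := t.2
    simp only [Fin.val_castLE]
    omega
  have hψS : ∀ t, ψ t ∈ SS n i := fun t =>
    (mem_SS_iff n j h i hij _ (hS _)).2 (hψc t)
  obtain ⟨G, hG⟩ := exists_inv n i _ eI ψ hψ hψS
  obtain ⟨F, hF⟩ := exists_inv n j _ eJ φ hφ hS
  refine ⟨_, F, (det_of_inv hG).2, (det_of_inv hF).1, ?_⟩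
  rw [mul_eq_one_comm] at hF
  have hkey : (Matrix.of fun t u => if ψ t ⊆ (eI.symm u : Finset ℕ) then (1 : ℤ) else 0) *
      (Matrix.of fun t u => W n i j (eI.symm t) (eJ.symm u)) =
      Dmat n i j * (Matrix.of fun t u => if φ t ⊆ (eJ.symm u : Finset ℕ) then (1 : ℤ) else 0) := by
    ext t u
    rw [Matrix.mul_apply, Matrix.mul_apply]
    simp only [Matrix.of_apply, W]
    rw [eI.symm.sum_comp (fun γ : ↥(stdSets n i) => (if ψ t ⊆ (γ : Finset ℕ) then (1 : ℤ) else 0) *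
      (if (γ : Finset ℕ) ⊆ (eJ.symm u : Finset ℕ) then 1 else 0))]
    rw [Finset.sum_coe_sort (stdSets n i) (fun γ => (if ψ t ⊆ γ then (1 : ℤ) else 0) *
      (if γ ⊆ (eJ.symm u : Finset ℕ) then 1 else 0))]
    rw [between n i j hij (ψ t) _ (eJ.symm u).2 (hψc t)]
    rw [Finset.sum_eq_single (Fin.castLE hle t)]
    · congr 1
      simp only [Dmat, Matrix.of_apply, Fin.val_castLE, if_true]
      rw [Finset.sum_eq_single (ψ t).card]
      · rw [if_pos]
        refine ⟨?_, (hlt _ ((hψc t).trans hij) (Fin.castLE hle t)).2 le_rfl⟩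
        rcases hc : (ψ t).card with _ | s
        · simp [mu, C]
        · have := (hlt s (by have := hψc t; omega) (Fin.castLE hle t)).not.2
            (by show ¬ (ψ t).card ≤ s; omega)
          push_cast
          rw [add_sub_cancel_right]
          simpa using this
      · intro s hs hne
        rw [if_neg]
        rintro ⟨h1, h2⟩
        rw [Finset.mem_range] at hs
        have h3 : (ψ t).card ≤ s := (hlt s (by omega) (Fin.castLE hle t)).1 h2
        rcases s with _ | s
        · omega
        · have h4 := (hlt s (by omega) (Fin.castLE hle t)).2 (by show (ψ t).card ≤ s; omega)
          push_cast at h1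
          rw [add_sub_cancel_right] at h1
          simp only [Fin.val_castLE] at h4
          omega
      · intro hh
        exact absurd (Finset.mem_range.2 (Nat.lt_succ_of_le (hψc t))) hh
    · intro v _ hv
      have : (t : ℕ) ≠ (v : ℕ) := fun hh => hv (Fin.ext hh.symm)
      simp [Dmat, this]
    · intro hh; exact absurd (Finset.mem_univ _) hh
  rw [hkey, Matrix.mul_assoc, hF, Matrix.mul_one]
end
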